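/- arXiv:1402.5509 — 4 statements merged into one kernel-verified Lean document; each statement's English description precedes it below -/
import Mathlib

section
/- Let K be a field, n ≥ 4, R = K[T_{ab} : 0 ≤ a < b ≤ n], and let L be the localization of R at the multiplicative set generated by all the variables T_{ab} (the Laurent polynomial ring in these variables). Let I ⊆ L be an ideal and let 0 ≤ i < j < k < l < m ≤ n. If the images in L of the Plücker relations q(i,j,k,l), q(i,j,k,m) and q(i,j,l,m) all lie in I, then the image in L of q(i,k,l,m) lies in I. -/
open MvPolynomial

/-- The index set of the polynomial ring `R = K[T_{ab} : 0 ≤ a < b ≤ n]`. -/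
abbrev PairIdx (n : ℕ) : Type := {p : ℕ × ℕ // p.1 < p.2 ∧ p.2 ≤ n}

/-- The variable `T_{ab}` of `K[T_{ab} : 0 ≤ a < b ≤ n]` (junk value `0` for
invalid index pairs). -/
noncomputable def T (K : Type*) [Field K] (n a b : ℕ) :
    MvPolynomial (PairIdx n) K :=
  if h : a < b ∧ b ≤ n then X ⟨(a, b), h⟩ else 0

/-- The Plücker relation `q(i,j,k,l) = T_{ij}T_{kl} − T_{ik}T_{jl} + T_{il}T_{jk}`. -/
noncomputable def q (K : Type*) [Field K] (n i j k l : ℕ) :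
    MvPolynomial (PairIdx n) K :=
  T K n i j * T K n k l - T K n i k * T K n j l + T K n i l * T K n j k

/-- The multiplicative set generated by all the variables `T_{ab}`. -/
noncomputable abbrev varMonoid (K : Type*) [Field K] (n : ℕ) :
    Submonoid (MvPolynomial (PairIdx n) K) :=
  Submonoid.closure (Set.range (X : PairIdx n → MvPolynomial (PairIdx n) K))

/-- The Laurent polynomial ring: the localization of `R` at the multiplicative
set generated by all the variables. -/
abbrev Laurent (K : Type*) [Field K] (n : ℕ) : Type _ :=
  Localization (varMonoid K n)

/-- If the images in the Laurent polynomial ring `L` of the Plücker relations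
`q(i,j,k,l)`, `q(i,j,k,m)` and `q(i,j,l,m)` lie an ideal `I ⊆ L`, then so does
the image of `q(i,k,l,m)`. -/
theorem stmt1 (K : Type*) [Field K] (n : ℕ) (hn : 4 ≤ n)
    (i j k l m : ℕ) (hij : i < j) (hjk : j < k) (hkl : k < l) (hlm : l < m)
    (hmn : m ≤ n)
    (I : Ideal (Laurent K n))
    (h1 : algebraMap (MvPolynomial (PairIdx n) K) (Laurent K n) (q K n i j k l) ∈ I)
    (h2 : algebraMap (MvPolynomial (PairIdx n) K) (Laurent K n) (q K n i j k m) ∈ I)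
    (h3 : algebraMap (MvPolynomial (PairIdx n) K) (Laurent K n) (q K n i j l m) ∈ I) :
    algebraMap (MvPolynomial (PairIdx n) K) (Laurent K n) (q K n i k l m) ∈ I := by
  have hT : T K n i j ∈ varMonoid K n := by
    have h : i < j ∧ j ≤ n := ⟨hij, by omega⟩
    rw [T, dif_pos h]
    exact Submonoid.subset_closure ⟨_, rfl⟩
  have hu : IsUnit (algebraMap (MvPolynomial (PairIdx n) K) (Laurent K n) (T K n i j)) :=
    IsLocalization.map_units (Laurent K n) (⟨_, hT⟩ : varMonoid K n)
  rw [← Ideal.unit_mul_mem_iff_mem I hu, ← map_mul]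
  have key : T K n i j * q K n i k l m =
      T K n i k * q K n i j l m - T K n i l * q K n i j k m + T K n i m * q K n i j k l := by
    unfold q
    ring
  rw [key, map_add, map_sub, map_mul, map_mul, map_mul]
  exact I.add_mem (I.sub_mem (I.mul_mem_left _ h3) (I.mul_mem_left _ h2)) (I.mul_mem_left _ h1)
end

section
/- Let K be a field, n ≥ 4, R = K[T_{ab} : 0 ≤ a < b ≤ n], and let L be the localization of R at the multiplicative set generated by all the variables T_{ab}. Fix two distinct indices i₀, j₀ ∈ {0, …, n}, and let I ⊆ L be the ideal generated by the images of the Plücker relations q({i₀, j₀, k, l}) for all k, l ∈ {0, …, n} such that i₀, j₀, k, l are pairwise distinct. Then for every choice of pairwise distinct indices i, j, k, l ∈ {0, …, n}, the image in L of the Plücker relation q({i, j, k, l}) lies in I. -/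
open MvPolynomial

theorem isUnit_neg_aux {A : Type*} [CommRing A] {x : A} (h : IsUnit x) : IsUnit (-x) := h.neg

/-- Sorting lemma: an antisymmetric family whose sorted Pluecker relations containing `i₀, j₀`
vanish satisfies all (unsorted, possibly degenerate) relations containing `i₀, j₀`. -/
theorem pl_sort {A : Type*} [CommRing A] (n i₀ j₀ : ℕ) (t : ℕ → ℕ → A)
    (t0 : ∀ a, t a a = 0) (ts : ∀ a b, t a b = - t b a)
    (h : ∀ a b c d, a < b → b < c → c < d → d ≤ n →
      (i₀ = a ∨ i₀ = b ∨ i₀ = c ∨ i₀ = d) → (j₀ = a ∨ j₀ = b ∨ j₀ = c ∨ j₀ = d) →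
      t a b * t c d - t a c * t b d + t a d * t b c = 0) :
    ∀ a b c d, a ≤ n → b ≤ n → c ≤ n → d ≤ n →
      (i₀ = a ∨ i₀ = b ∨ i₀ = c ∨ i₀ = d) → (j₀ = a ∨ j₀ = b ∨ j₀ = c ∨ j₀ = d) →
      t a b * t c d - t a c * t b d + t a d * t b c = 0 := by
  have L1 : ∀ a b c d, a < b → b < c → c ≤ n → d ≤ n →
      (i₀ = a ∨ i₀ = b ∨ i₀ = c ∨ i₀ = d) → (j₀ = a ∨ j₀ = b ∨ j₀ = c ∨ j₀ = d) →
      t a b * t c d - t a c * t b d + t a d * t b c = 0 := by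
    intro a b c d hab hbc hc hd hi hj
    rcases lt_trichotomy c d with h1 | h1 | h1
    · exact h a b c d hab hbc h1 hd hi hj
    · subst h1; rw [t0]; ring
    rcases lt_trichotomy b d with h2 | h2 | h2
    · have := h a b d c hab h2 h1 hc (by tauto) (by tauto)
      rw [ts c d]; linear_combination -this
    · subst h2; rw [t0, ts c b]; ring
    rcases lt_trichotomy a d with h3 | h3 | h3
    · have := h a d b c h3 h2 hbc hc (by tauto) (by tauto)
      rw [ts c d, ts b d]; linear_combination this
    · subst h3; rw [t0, ts c a, ts b a]; ring
    · have := h d a b c h3 hab hbc hc (by tauto) (by tauto)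
      rw [ts c d, ts b d, ts a d]; linear_combination -this
  have L2 : ∀ a b c d, a < b → b ≤ n → c ≤ n → d ≤ n →
      (i₀ = a ∨ i₀ = b ∨ i₀ = c ∨ i₀ = d) → (j₀ = a ∨ j₀ = b ∨ j₀ = c ∨ j₀ = d) →
      t a b * t c d - t a c * t b d + t a d * t b c = 0 := by
    intro a b c d hab hb hc hd hi hj
    rcases lt_trichotomy b c with h2 | h2 | h2
    · exact L1 a b c d hab h2 hc hd hi hj
    · subst h2; rw [t0]; ring
    rcases lt_trichotomy a c with h3 | h3 | h3
    · have := L1 a c b d h3 h2 hb hd (by tauto) (by tauto)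
      rw [ts b c]; linear_combination -this
    · subst h3; rw [t0, ts b a]; ring
    · have := L1 c a b d h3 hab hb hd (by tauto) (by tauto)
      rw [ts b c, ts a c]; linear_combination this
  intro a b c d ha hb hc hd hi hj
  rcases lt_trichotomy a b with h2 | h2 | h2
  · exact L2 a b c d h2 hb hc hd hi hj
  · subst h2; rw [t0]; ring
  · have := L2 b a c d h2 ha hc hd (by tauto) (by tauto)
    rw [ts a b]; linear_combination -this

/-- If `t i₀ j₀` is a unit, the relations containing `i₀, j₀` imply all relations. -/
theorem pl_all {A : Type*} [CommRing A] (n i₀ j₀ : ℕ) (hi : i₀ ≤ n) (hj : j₀ ≤ n)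
    (t : ℕ → ℕ → A)
    (t0 : ∀ a, t a a = 0) (ts : ∀ a b, t a b = - t b a) (hu : IsUnit (t i₀ j₀))
    (h : ∀ a b c d, a < b → b < c → c < d → d ≤ n →
      (i₀ = a ∨ i₀ = b ∨ i₀ = c ∨ i₀ = d) → (j₀ = a ∨ j₀ = b ∨ j₀ = c ∨ j₀ = d) →
      t a b * t c d - t a c * t b d + t a d * t b c = 0)
    (a b c d : ℕ) (ha : a ≤ n) (hb : b ≤ n) (hc : c ≤ n) (hd : d ≤ n) :
    t a b * t c d - t a c * t b d + t a d * t b c = 0 := by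
  obtain ⟨v, hv⟩ := hu.exists_left_inv
  have key : ∀ k l, k ≤ n → l ≤ n →
      t k l = v * (t i₀ k * t j₀ l - t i₀ l * t j₀ k) := by
    intro k l hk hl
    have := pl_sort n i₀ j₀ t t0 ts h i₀ j₀ k l hi hj hk hl (by tauto) (by tauto)
    linear_combination v * this - t k l * hv
  rw [key a b ha hb, key c d hc hd, key a c ha hc, key b d hb hd, key a d ha hd, key b c hb hc]
  ring

/-- Let `I ⊆ L` be the ideal generated by the images of the Plücker relations
`q({i₀,j₀,k,l})` (the Plücker relation of the elements of the 4-element set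
`{i₀,j₀,k,l}` sorted increasingly, i.e. `q(a,b,c,d)` where `a < b < c < d` and
`{a,b,c,d} = {i₀,j₀,k,l}`) for all `k, l ∈ {0,…,n}` with `i₀,j₀,k,l` pairwise
distinct. Then for all pairwise distinct `i,j,k,l ∈ {0,…,n}` the image of the
Plücker relation `q({i,j,k,l})` lies in `I`. -/
theorem stmt2 (K : Type*) [Field K] (n : ℕ) (hn : 4 ≤ n)
    (i₀ j₀ : ℕ) (hi₀ : i₀ ≤ n) (hj₀ : j₀ ≤ n) (hne : i₀ ≠ j₀)
    (I : Ideal (Laurent K n))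
    (hI : I = Ideal.span {x : Laurent K n | ∃ a b c d : ℕ,
        a < b ∧ b < c ∧ c < d ∧ d ≤ n ∧
        i₀ ∈ ({a, b, c, d} : Finset ℕ) ∧ j₀ ∈ ({a, b, c, d} : Finset ℕ) ∧
        x = algebraMap (MvPolynomial (PairIdx n) K) (Laurent K n) (q K n a b c d)}) :
    ∀ i j k l : ℕ, i ≤ n → j ≤ n → k ≤ n → l ≤ n →
      i ≠ j → i ≠ k → i ≠ l → j ≠ k → j ≠ l → k ≠ l →
      ∀ a b c d : ℕ, a < b → b < c → c < d →
        ({a, b, c, d} : Finset ℕ) = {i, j, k, l} →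
        algebraMap (MvPolynomial (PairIdx n) K) (Laurent K n) (q K n a b c d) ∈ I := by
  intro i j k l hi hj hk hl _ _ _ _ _ _ a b c d hab hbc hcd hset
  have hd : d ≤ n := by
    have : d ∈ ({i, j, k, l} : Finset ℕ) := by rw [← hset]; simp
    simp only [Finset.mem_insert, Finset.mem_singleton] at this
    omega
  let φ : MvPolynomial (PairIdx n) K →+* (Laurent K n ⧸ I) :=
    (Ideal.Quotient.mk I).comp (algebraMap (MvPolynomial (PairIdx n) K) (Laurent K n))
  let t : ℕ → ℕ → (Laurent K n ⧸ I) := fun a b => φ (T K n a b) - φ (T K n b a)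
  have tlt : ∀ a b, a < b → t a b = φ (T K n a b) := by
    intro a b hab
    have h0 : T K n b a = 0 := by
      unfold T
      rw [dif_neg]
      omega
    simp only [t, h0, map_zero, sub_zero]
  have t0 : ∀ a, t a a = 0 := fun a => sub_self _
  have ts : ∀ a b, t a b = - t b a := fun a b => (neg_sub _ _).symm
  have tq : ∀ a b c d, a < b → b < c → c < d →
      φ (q K n a b c d) = t a b * t c d - t a c * t b d + t a d * t b c := by
    intro a b c d hab hbc hcd
    rw [tlt a b hab, tlt c d hcd, tlt a c (hab.trans hbc), tlt b d (hbc.trans hcd),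
      tlt a d (hab.trans (hbc.trans hcd)), tlt b c hbc]
    simp only [q, map_add, map_sub, map_mul]
  have tu : ∀ a b, a < b → b ≤ n → IsUnit (t a b) := by
    intro a b hab hb
    rw [tlt a b hab]
    have hT : T K n a b = X ⟨(a, b), hab, hb⟩ := by
      unfold T
      rw [dif_pos ⟨hab, hb⟩]
    rw [hT]
    exact (IsLocalization.map_units (Laurent K n)
      (⟨X ⟨(a, b), hab, hb⟩, Submonoid.subset_closure ⟨_, rfl⟩⟩ : varMonoid K n)).map
      (Ideal.Quotient.mk I)
  have hu : IsUnit (t i₀ j₀) := by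
    rcases lt_or_gt_of_ne hne with h | h
    · exact tu _ _ h hj₀
    · rw [ts]
      exact isUnit_neg_aux (A := Laurent K n ⧸ I) (tu _ _ h hi₀)
  rw [← Ideal.Quotient.eq_zero_iff_mem]
  change φ (q K n a b c d) = 0
  rw [tq a b c d hab hbc hcd]
  refine pl_all n i₀ j₀ hi₀ hj₀ t t0 ts hu ?_ a b c d (by omega) (by omega) (by omega) hd
  intro a b c d hab hbc hcd hd hi hj
  rw [← tq a b c d hab hbc hcd]
  refine Ideal.Quotient.eq_zero_iff_mem.2 ?_
  rw [hI]
  exact Ideal.subset_span ⟨a, b, c, d, hab, hbc, hcd, hd, by simpa using hi, by simpa using hj, rfl⟩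
end

section
/- Let K be a field and let R = K[T_∞, T_1, …, T_n] be the polynomial ring, graded by ℕ via a weight function assigning to each variable T_i a weight w_i ∈ ℕ and to T_∞ a weight w_∞ with w_∞ > 0 (weighted grading by total weighted degree). Let I ⊆ R be an ideal that is homogeneous with respect to this grading, i.e. every weighted homogeneous component of every element of I again lies in I. Suppose that T_∞ ∉ √I, that the ideal I + ⟨T_∞⟩ is prime, and that the radical √I is prime. Then I is prime. -/
open MvPolynomial

/-- Let `R = K[T_∞, T_1, …, T_n]` (with `T_∞ = X none` and `T_i = X (some i)`),
graded by `ℕ` via a weight function `w` with `w(T_∞) > 0`. If `I ⊆ R` is an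
ideal that is homogeneous for the weighted grading (i.e. contains all weighted
homogeneous components of each of its elements), `T_∞ ∉ √I`, the ideal
`I + ⟨T_∞⟩` is prime and the radical `√I` is prime, then `I` is prime. -/
theorem stmt5 (K : Type*) [Field K] (n : ℕ)
    (w : Option (Fin n) → ℕ) (hw : 0 < w none)
    (I : Ideal (MvPolynomial (Option (Fin n)) K))
    (hhom : ∀ p ∈ I, ∀ d : ℕ, weightedHomogeneousComponent w d p ∈ I)
    (hrad : X none ∉ I.radical)
    (hprime₁ : (I + Ideal.span {(X none : MvPolynomial (Option (Fin n)) K)}).IsPrime)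
    (hprime₂ : I.radical.IsPrime) :
    I.IsPrime := by
  have step : ∀ k : ℕ, ∀ f ∈ I.radical, ∃ a ∈ I, ∃ g ∈ I.radical, f = a + X none ^ k * g := by
    intro k
    induction k with
    | zero => intro f hf; exact ⟨0, I.zero_mem, f, hf, by simp⟩
    | succ k ih =>
      intro f hf
      obtain ⟨a, ha, g, hg, rfl⟩ := ih f hf
      have hgJ := (hprime₁.radical_le_iff.2 (show I ≤ _ from le_sup_left)) hg
      obtain ⟨b, hb, c, hc, hbc⟩ := Submodule.mem_sup.1 hgJ
      obtain ⟨e, rfl⟩ := Ideal.mem_span_singleton'.1 hc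
      have he : e * X none ∈ I.radical := by
        have h1 : e * X none = g - b := by rw [← hbc]; ring
        rw [h1]
        exact sub_mem hg (Ideal.le_radical hb)
      refine ⟨a + X none ^ k * b, I.add_mem ha (I.mul_mem_left _ hb), e,
        (hprime₂.mem_or_mem he).resolve_right hrad, ?_⟩
      rw [← hbc]; ring
  have comp0 : ∀ (d : ℕ) (g : MvPolynomial (Option (Fin n)) K),
      weightedHomogeneousComponent w d (X none ^ (d + 1) * g) = 0 := by
    classical
    intro d g
    ext m
    rw [coeff_weightedHomogeneousComponent, coeff_zero]
    split_ifs with h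
    · rw [X_pow_eq_monomial, coeff_monomial_mul', if_neg]
      intro hle
      obtain ⟨t, rfl⟩ := exists_add_of_le hle
      rw [map_add, Finsupp.weight_single, smul_eq_mul] at h
      nlinarith
    · rfl
  have hle : I.radical ≤ I := by
    intro f hf
    rw [← sum_weightedHomogeneousComponent w f]
    rw [finsum_eq_sum _ (weightedHomogeneousComponent_finsupp f)]
    refine I.sum_mem fun d _ => ?_
    obtain ⟨a, ha, g, _, rfl⟩ := step (d + 1) f hf
    rw [map_add, comp0, add_zero]
    exact hhom a ha d
  rwa [le_antisymm hle Ideal.le_radical] at hprime₂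
end

section
/- Let K be an algebraically closed field and n ≥ 2. Identify the polynomial ring K[S_{i,n+1}, S_{i,n+2} : 1 ≤ i ≤ n] with the ring of polynomial functions on (K²)ⁿ, where the i-th factor K² has coordinates (S_{i,n+1}, S_{i,n+2}). Let V ⊆ (K²)ⁿ be the set of tuples (x_1, …, x_n) such that every x_i is nonzero and any two x_i, x_j are linearly dependent over K. Then the vanishing ideal I(V) ⊆ K[S_{i,n+1}, S_{i,n+2} : 1 ≤ i ≤ n] equals the ideal generated by the 2×2 minors S_{i,n+1}S_{j,n+2} − S_{i,n+2}S_{j,n+1} for 1 ≤ i < j ≤ n, and this ideal is prime. -/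
open MvPolynomial

/-- The index set of the polynomial ring `K[S_{i,n+1}, S_{i,n+2} : 1 ≤ i ≤ n]`:
the pair `(i, 0)` stands for `S_{i,n+1}` and `(i, 1)` for `S_{i,n+2}`. A point
`v : Fin n × Fin 2 → K` of `(K²)ⁿ` has `i`-th component
`x_i = (v (i,0), v (i,1)) ∈ K²`. -/
abbrev Idx (n : ℕ) : Type := Fin n × Fin 2

/-- The `i`-th component `x_i ∈ K²` (as a vector `Fin 2 → K`) of a point `v` of
`(K²)ⁿ`. -/
def col {K : Type*} {n : ℕ} (v : Idx n → K) (i : Fin n) : Fin 2 → K :=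
  fun b => v (i, b)

/-- The set `V ⊆ (K²)ⁿ` of tuples `(x_1, …, x_n)` such that every `x_i` is
nonzero and any two `x_i, x_j` are linearly dependent over `K`. -/
def V (K : Type*) [Field K] (n : ℕ) : Set (Idx n → K) :=
  {v | (∀ i : Fin n, col v i ≠ 0) ∧
    ∀ i j : Fin n, ¬ LinearIndependent K ![col v i, col v j]}

/-- The ideal generated by the `2×2` minors
`S_{i,n+1}S_{j,n+2} − S_{i,n+2}S_{j,n+1}`, `1 ≤ i < j ≤ n`, of the `2×n` matrix
whose columns are the `(S_{i,n+1}, S_{i,n+2})ᵗ`. -/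
noncomputable def minorsIdeal (K : Type*) [Field K] (n : ℕ) :
    Ideal (MvPolynomial (Idx n) K) :=
  Ideal.span {x | ∃ i j : Fin n, i < j ∧
    x = X (i, 0) * X (j, 1) - X (i, 1) * X (j, 0)}

theorem aux_multiset {α β A : Type*} [CommRing A] (x : α × β → A)
    (hx : ∀ i j b c, x (i, b) * x (j, c) = x (i, c) * x (j, b)) (s : Multiset (α × β)) :
    ∀ t : Multiset (α × β), s.map Prod.fst = t.map Prod.fst → s.map Prod.snd = t.map Prod.snd →
      (s.map x).prod = (t.map x).prod := by
  classical
  induction s using Multiset.induction with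
  | empty =>
    intro t h1 h2
    have : t = 0 := by
      simpa using h1.symm
    simp [this]
  | cons p s ih =>
    obtain ⟨i, b⟩ := p
    intro t h1 h2
    have hi : i ∈ t.map Prod.fst := by rw [← h1]; simp
    have hb : b ∈ t.map Prod.snd := by rw [← h2]; simp
    obtain ⟨⟨i', c⟩, hc, hi'⟩ := Multiset.mem_map.1 hi
    obtain ⟨⟨j, b'⟩, hj, hb'⟩ := Multiset.mem_map.1 hb
    simp only at hi' hb'
    subst hi' hb'
    by_cases hcb : c = b'
    · subst hcb
      obtain ⟨t', rfl⟩ := Multiset.exists_cons_of_mem hc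
      simp only [Multiset.map_cons, Multiset.cons_inj_right] at h1 h2
      simp only [Multiset.map_cons, Multiset.prod_cons]
      rw [ih t' h1 h2]
    · obtain ⟨t', rfl⟩ := Multiset.exists_cons_of_mem hc
      have hj' : (j, b') ∈ t' := by
        rcases Multiset.mem_cons.1 hj with h | h
        · exact absurd (Prod.ext_iff.1 h).2.symm hcb
        · exact h
      obtain ⟨t'', rfl⟩ := Multiset.exists_cons_of_mem hj'
      simp only [Multiset.map_cons, Multiset.cons_inj_right] at h1 h2
      rw [Multiset.cons_swap, Multiset.cons_inj_right] at h2
      have := ih ((j, c) ::ₘ t'') (by simpa using h1) (by simpa using h2)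
      simp only [Multiset.map_cons, Multiset.prod_cons] at this ⊢
      rw [this, ← mul_assoc, ← mul_assoc, hx]

noncomputable def phi (K : Type*) [Field K] (n : ℕ) :
    MvPolynomial (Idx n) K →ₐ[K] MvPolynomial (Fin n ⊕ Fin 2) K :=
  aeval (fun p => X (Sum.inl p.1) * X (Sum.inr p.2))

noncomputable def expo (n : ℕ) (m : Idx n →₀ ℕ) : (Fin n ⊕ Fin 2) →₀ ℕ :=
  (m.mapDomain Prod.fst).mapDomain Sum.inl + (m.mapDomain Prod.snd).mapDomain Sum.inr

theorem phi_monomial (K : Type*) [Field K] (n : ℕ) (m : Idx n →₀ ℕ) :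
    phi K n (monomial m 1) = monomial (expo n m) 1 := by
  induction m using Finsupp.induction_linear with
  | zero => simp [expo]
  | add f g hf hg =>
    have h1 : (monomial (f + g) (1 : K)) = monomial f 1 * monomial g 1 := by
      simp [monomial_mul]
    have h2 : expo n (f + g) = expo n f + expo n g := by
      simp only [expo, Finsupp.mapDomain_add]; abel
    rw [h1, map_mul, hf, hg, h2, monomial_mul, one_mul]
  | single p k =>
    rw [← MvPolynomial.X_pow_eq_monomial, map_pow]
    simp only [phi, aeval_X, expo, Finsupp.mapDomain_single]
    rw [mul_pow, MvPolynomial.X_pow_eq_monomial, MvPolynomial.X_pow_eq_monomial, monomial_mul,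
      one_mul]

theorem expo_inj {n : ℕ} {m m' : Idx n →₀ ℕ} (h : expo n m = expo n m') :
    m.mapDomain Prod.fst = m'.mapDomain Prod.fst ∧
    m.mapDomain Prod.snd = m'.mapDomain Prod.snd := by
  constructor
  · ext i
    have := DFunLike.congr_fun h (Sum.inl i)
    simpa [expo, Finsupp.mapDomain_apply Sum.inl_injective, Finsupp.mapDomain_of_notMem_range] using this
  · ext i
    have := DFunLike.congr_fun h (Sum.inr i)
    simpa [expo, Finsupp.mapDomain_apply Sum.inr_injective, Finsupp.mapDomain_of_notMem_range] using this

theorem mk_rel (K : Type*) [Field K] (n : ℕ) (i j : Fin n) (b c : Fin 2) :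
    X (i, b) * X (j, c) - X (i, c) * X (j, b) ∈ minorsIdeal K n := by
  have key : ∀ i j : Fin n, (X (i, 0) * X (j, 1) - X (i, 1) * X (j, 0) :
      MvPolynomial (Idx n) K) ∈ minorsIdeal K n := by
    intro i j
    rcases lt_trichotomy i j with h | h | h
    · exact Ideal.subset_span ⟨i, j, h, rfl⟩
    · subst h
      rw [mul_comm, sub_self]; exact zero_mem _
    · rw [← neg_mem_iff]
      have h3 : (X (j, 0) * X (i, 1) - X (j, 1) * X (i, 0) : MvPolynomial (Idx n) K)
          ∈ minorsIdeal K n := Ideal.subset_span ⟨j, i, h, rfl⟩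
      convert h3 using 1
      ring
  fin_cases b <;> fin_cases c
  · simp
  · exact key i j
  · rw [← neg_mem_iff]
    convert key i j using 1
    simp
  · simp

theorem mk_monomial_eq (K : Type*) [Field K] (n : ℕ) {m m' : Idx n →₀ ℕ}
    (h : expo n m = expo n m') :
    Ideal.Quotient.mk (minorsIdeal K n) (monomial m 1) =
      Ideal.Quotient.mk (minorsIdeal K n) (monomial m' 1) := by
  have hm : ∀ m : Idx n →₀ ℕ, Ideal.Quotient.mk (minorsIdeal K n) (monomial m 1) =
      ((Finsupp.toMultiset m).map
        (fun p => Ideal.Quotient.mk (minorsIdeal K n) (X p))).prod := by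
    intro m
    rw [Finsupp.toMultiset_map, Finsupp.prod_toMultiset,
      Finsupp.prod_mapDomain_index (by simp) (by intros; rw [pow_add]), monomial_eq]
    rw [C_1, one_mul, Finsupp.prod, map_prod]
    simp only [map_pow, Finsupp.prod]
  rw [hm, hm]
  obtain ⟨h1, h2⟩ := expo_inj h
  apply aux_multiset
  · intro i j b c
    rw [← map_mul, ← map_mul, Ideal.Quotient.eq]
    exact mk_rel K n i j b c
  · rw [Finsupp.toMultiset_map, Finsupp.toMultiset_map, h1]
  · rw [Finsupp.toMultiset_map, Finsupp.toMultiset_map, h2]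

theorem ker_phi (K : Type*) [Field K] (n : ℕ) :
    RingHom.ker (phi K n) = minorsIdeal K n := by
  apply le_antisymm
  · intro p hp
    let ψ : MvPolynomial (Fin n ⊕ Fin 2) K →ₗ[K] (MvPolynomial (Idx n) K ⧸ minorsIdeal K n) :=
      (basisMonomials (Fin n ⊕ Fin 2) K).constr K
        (fun e => Ideal.Quotient.mk (minorsIdeal K n)
          (monomial (Function.invFun (expo n) e) 1))
    have hψ : ψ ∘ₗ (phi K n).toLinearMap = (Ideal.Quotient.mkₐ K (minorsIdeal K n)).toLinearMap := by
      apply (basisMonomials (Idx n) K).ext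
      intro m
      have : ψ (monomial (expo n m) 1) = Ideal.Quotient.mk (minorsIdeal K n)
          (monomial (Function.invFun (expo n) (expo n m)) 1) := by
        have := (basisMonomials (Fin n ⊕ Fin 2) K).constr_basis K
          (fun e => Ideal.Quotient.mk (minorsIdeal K n)
          (monomial (Function.invFun (expo n) e) 1)) (expo n m)
        simpa only [coe_basisMonomials] using this
      simp only [coe_basisMonomials, LinearMap.comp_apply, AlgHom.toLinearMap_apply,
        phi_monomial, this, Ideal.Quotient.mkₐ_eq_mk]
      exact mk_monomial_eq K n (Function.invFun_eq ⟨m, rfl⟩)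
    have h := LinearMap.congr_fun hψ p
    simp only [LinearMap.comp_apply, AlgHom.toLinearMap_apply, Ideal.Quotient.mkₐ_eq_mk] at h
    rw [(RingHom.mem_ker).1 hp, map_zero] at h
    exact Ideal.Quotient.eq_zero_iff_mem.1 h.symm
  · refine Ideal.span_le.2 ?_
    rintro _ ⟨i, j, -, rfl⟩
    simp only [SetLike.mem_coe, RingHom.mem_ker, phi, map_sub, map_mul, aeval_X]
    ring

theorem eval_phi {K : Type*} [Field K] {n : ℕ} (w : Fin n ⊕ Fin 2 → K)
    (p : MvPolynomial (Idx n) K) : eval w (phi K n p) =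
      eval (fun q : Idx n => w (Sum.inl q.1) * w (Sum.inr q.2)) p := by
  induction p using MvPolynomial.induction_on with
  | C a => simp [phi]
  | add p q hp hq => rw [map_add, map_add, map_add, hp, hq]
  | mul_X p q hp =>
    rw [map_mul, map_mul, map_mul, hp]
    simp [phi]

/-- The vanishing ideal of `V` equals the ideal generated by the `2×2` minors
`S_{i,n+1}S_{j,n+2} − S_{i,n+2}S_{j,n+1}` (`1 ≤ i < j ≤ n`), and this ideal is
prime. -/
theorem stmt12 (K : Type*) [Field K] [IsAlgClosed K] (n : ℕ) (hn : 2 ≤ n) :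
    {p : MvPolynomial (Idx n) K | ∀ v ∈ V K n, eval v p = 0}
      = ↑(minorsIdeal K n) ∧ (minorsIdeal K n).IsPrime := by
  have : Infinite K := IsAlgClosed.instInfinite
  refine ⟨?_, ?_⟩
  · apply Set.Subset.antisymm
    · intro p hp
      rw [← ker_phi, SetLike.mem_coe, RingHom.mem_ker]
      have hz : phi K n p * (X (Sum.inr 0) * ∏ i : Fin n, X (Sum.inl i)) = 0 := by
        apply MvPolynomial.funext
        intro w
        rw [map_zero, map_mul]
        by_cases h0 : w (Sum.inr 0) = 0
        · simp [h0]
        by_cases h1 : ∃ i : Fin n, w (Sum.inl i) = 0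
        · obtain ⟨i, hi⟩ := h1
          have : ∏ i : Fin n, w (Sum.inl i) = 0 := Finset.prod_eq_zero (Finset.mem_univ i) hi
          simp [this]
        push Not at h1
        have hv := hp (fun q => w (Sum.inl q.1) * w (Sum.inr q.2)) ⟨?_, ?_⟩
        · have : eval w (phi K n p) =
              eval (fun q : Idx n => w (Sum.inl q.1) * w (Sum.inr q.2)) p := by
            exact eval_phi w p
          rw [this, hv, zero_mul]
        · intro i h
          have := congrFun h 0
          simp [col, h0, h1] at this
        · intro i j h
          rw [LinearIndependent.pair_iff] at h
          have := h (w (Sum.inl j)) (- w (Sum.inl i)) (by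
            ext b; simp [col]; ring)
          exact h1 j this.1
      rcases mul_eq_zero.1 hz with h | h
      · exact h
      · exfalso
        rcases mul_eq_zero.1 h with h | h
        · exact X_ne_zero _ h
        · obtain ⟨i, -, hi⟩ := Finset.prod_eq_zero_iff.1 h
          exact X_ne_zero _ hi
    · intro p hp v hv
      have : minorsIdeal K n ≤ RingHom.ker (eval v) := by
        refine Ideal.span_le.2 ?_
        rintro _ ⟨i, j, -, rfl⟩
        simp only [SetLike.mem_coe, RingHom.mem_ker, map_sub, map_mul, eval_X]
        by_contra hne
        apply hv.2 i j
        rw [LinearIndependent.pair_iff]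
        intro s t hst
        have e0 := congrFun hst 0
        have e1 := congrFun hst 1
        simp only [col, Pi.add_apply, Pi.smul_apply, smul_eq_mul, Pi.zero_apply] at e0 e1
        constructor
        · refine (mul_eq_zero.1 ?_).resolve_right hne
          linear_combination v (j, 1) * e0 - v (j, 0) * e1
        · refine (mul_eq_zero.1 ?_).resolve_right hne
          linear_combination v (i, 0) * e1 - v (i, 1) * e0
      exact this hp
  · rw [← ker_phi]
    exact RingHom.ker_isPrime _
end
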